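/- For s ∈ (0, 1/2), the operator D_x (−Δ)^{−s} applied to a Schwartz function u on ℝ^d has the pointwise representation D_x (−Δ)^{−s} u (x) = N(d,s) · p.v. ∫_{ℝ^d} u(x−y) · y / |y|^{d−2s+2} dy for some constant N(d,s). -/

import Mathlib

open MeasureTheory Filter Metric Set
open scoped ENNReal NNReal Topology

/-! For a kernel `k` that is bounded and Lipschitz, the derivative of `x ↦ ∫ k (y) f (x - y) dy` may
be put on `f` or, by Rademacher's theorem, on `k`; since derivatives are unique, the two results
agree, which is integration by parts. Apply this to `k_ε (y) = max (‖y‖, ε) ^ (-a)` with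
`a = d - 2s`: because `k_ε` is continuous across the sphere `‖y‖ = ε`, no boundary term appears, and
its gradient is exactly `-a ‖y‖ ^ (-a - 2) y` truncated to `ε < ‖y‖`. As `ε → 0`, dominated
convergence sends the side with the derivative on `f` to the gradient of the Riesz potential. -/

section PrincipalValue

variable {E F : Type*} [NormedAddCommGroup E] [MeasurableSpace E] [NormedAddCommGroup F]
  [NormedSpace ℝ F]

/-- `HasPrincipalValue μ f L` says that the principal value at the origin of the integral of `f`
exists and equals `L`, the excised neighbourhoods being the closed balls around `0`. -/
def HasPrincipalValue (μ : Measure E) (f : E → F) (L : F) : Prop :=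
  Tendsto (fun ε : ℝ => ∫ y in {y : E | ε < ‖y‖}, f y ∂μ) (𝓝[>] 0) (𝓝 L)

end PrincipalValue

section NormWeight

variable {E : Type*} [SeminormedAddCommGroup E]

theorem one_add_norm_le_mul_one_add_norm_sub (x y : E) :
    1 + ‖y‖ ≤ (1 + ‖x‖) * (1 + ‖x - y‖) := by
  have h : ‖y‖ ≤ ‖x‖ + ‖x - y‖ := by simpa using norm_sub_le x (x - y)
  nlinarith [mul_nonneg (norm_nonneg x) (norm_nonneg (x - y))]

theorem aestronglyMeasurable_of_integrable_mul_one_add_norm [MeasurableSpace E]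
    [OpensMeasurableSpace E] {μ : Measure E} {K : E → ℝ} {n : ℕ}
    (hK : Integrable (fun y => K y * (1 + ‖y‖) ^ (-(n : ℝ))) μ) : AEStronglyMeasurable K μ := by
  have hw : AEStronglyMeasurable (fun y : E => (1 + ‖y‖) ^ n) μ := by fun_prop
  refine (hK.aestronglyMeasurable.mul hw).congr (ae_of_all _ fun y => ?_)
  have hy : (1 + ‖y‖) ^ n ≠ 0 := by positivity
  simp only [Pi.mul_apply, Real.rpow_neg (by positivity : 0 ≤ 1 + ‖y‖), Real.rpow_natCast,
    inv_mul_cancel_right₀ hy]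

end NormWeight

section SchwartzConvolution

variable {E F : Type*} [NormedAddCommGroup E] [NormedSpace ℝ E] [NormedAddCommGroup F]
  [NormedSpace ℝ F]

theorem exists_forall_norm_schwartz_sub_le (f : SchwartzMap E F) (n : ℕ) :
    ∃ C, 0 ≤ C ∧ ∀ x y : E, ‖f (x - y)‖ ≤ C * (1 + ‖x‖) ^ n * (1 + ‖y‖) ^ (-(n : ℝ)) := by
  let M := 2 ^ n * ((Finset.Iic (n, 0)).sup fun m => SchwartzMap.seminorm ℝ m.1 m.2) f
  have hM (z : E) : (1 + ‖z‖) ^ n * ‖f z‖ ≤ M := by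
    simpa using SchwartzMap.one_add_le_sup_seminorm_apply (𝕜 := ℝ) (m := (n, 0)) (k := n) (n := 0)
      le_rfl le_rfl f z
  refine ⟨M, by positivity, fun x y => ?_⟩
  rw [Real.rpow_neg (by positivity), Real.rpow_natCast, ← div_eq_mul_inv,
    le_div_iff₀ (by positivity)]
  calc ‖f (x - y)‖ * (1 + ‖y‖) ^ n
      ≤ ‖f (x - y)‖ * ((1 + ‖x‖) * (1 + ‖x - y‖)) ^ n := by
        gcongr; exact one_add_norm_le_mul_one_add_norm_sub x y
    _ = ((1 + ‖x - y‖) ^ n * ‖f (x - y)‖) * (1 + ‖x‖) ^ n := by rw [mul_pow]; ring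
    _ ≤ M * (1 + ‖x‖) ^ n := by gcongr; exact hM _

variable [MeasurableSpace E] [BorelSpace E] [SecondCountableTopology E] {μ : Measure E}

theorem aestronglyMeasurable_schwartz_sub (f : SchwartzMap E F) (x : E) :
    AEStronglyMeasurable (fun y => f (x - y)) μ :=
  (f.continuous.comp (continuous_const.sub continuous_id)).aestronglyMeasurable

variable {K : E → ℝ} {n : ℕ}

theorem integrable_smul_schwartz_sub (hK : Integrable (fun y => K y * (1 + ‖y‖) ^ (-(n : ℝ))) μ)
    (f : SchwartzMap E F) (x : E) : Integrable (fun y => K y • f (x - y)) μ := by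
  obtain ⟨C, -, hC⟩ := exists_forall_norm_schwartz_sub_le f n
  refine (hK.norm.const_mul (C * (1 + ‖x‖) ^ n)).mono'
    ((aestronglyMeasurable_of_integrable_mul_one_add_norm hK).smul
      (aestronglyMeasurable_schwartz_sub f x)) (ae_of_all _ fun y => ?_)
  have hw : 0 ≤ (1 + ‖y‖) ^ (-(n : ℝ)) := by positivity
  calc ‖K y • f (x - y)‖
      ≤ ‖K y‖ * (C * (1 + ‖x‖) ^ n * (1 + ‖y‖) ^ (-(n : ℝ))) := by
        rw [norm_smul]; gcongr; exact hC x y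
    _ = C * (1 + ‖x‖) ^ n * ‖K y * (1 + ‖y‖) ^ (-(n : ℝ))‖ := by
        rw [norm_mul, Real.norm_of_nonneg hw]; ring

theorem hasFDerivAt_integral_smul_schwartz_sub
    (hK : Integrable (fun y => K y * (1 + ‖y‖) ^ (-(n : ℝ))) μ) (f : SchwartzMap E F) (x : E) :
    HasFDerivAt (fun x' => ∫ y, K y • f (x' - y) ∂μ) (∫ y, K y • fderiv ℝ f (x - y) ∂μ) x := by
  let f' := SchwartzMap.fderivCLM ℝ E F f
  obtain ⟨C, hC0, hC⟩ := exists_forall_norm_schwartz_sub_le f' n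
  refine hasFDerivAt_integral_of_dominated_of_fderiv_le (F' := fun x' y => K y • f' (x' - y))
    (bound := fun y => C * (2 + ‖x‖) ^ n * ‖K y * (1 + ‖y‖) ^ (-(n : ℝ))‖)
    (ball_mem_nhds x one_pos)
    (.of_forall fun x' => (integrable_smul_schwartz_sub hK f x').aestronglyMeasurable)
    (integrable_smul_schwartz_sub hK f x)
    (integrable_smul_schwartz_sub hK f' x).aestronglyMeasurable
    (ae_of_all _ fun y x' hx' => ?_) (hK.norm.const_mul _) (ae_of_all _ fun y x' _ => ?_)
  · have hx : 1 + ‖x'‖ ≤ 2 + ‖x‖ := by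
      linarith [norm_sub_norm_le x' x, mem_ball_iff_norm.1 hx']
    have hw : 0 ≤ (1 + ‖y‖) ^ (-(n : ℝ)) := by positivity
    calc ‖K y • f' (x' - y)‖
        ≤ ‖K y‖ * (C * (1 + ‖x'‖) ^ n * (1 + ‖y‖) ^ (-(n : ℝ))) := by
          rw [norm_smul]; gcongr; exact hC x' y
      _ ≤ ‖K y‖ * (C * (2 + ‖x‖) ^ n * (1 + ‖y‖) ^ (-(n : ℝ))) := by gcongr
      _ = C * (2 + ‖x‖) ^ n * ‖K y * (1 + ‖y‖) ^ (-(n : ℝ))‖ := by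
          rw [norm_mul, Real.norm_of_nonneg hw]; ring
  · exact (f.differentiableAt.hasFDerivAt.comp x'
      ((hasFDerivAt_id x').sub_const y)).const_smul (K y)

end SchwartzConvolution

section LipschitzKernel

variable {E F : Type*} [NormedAddCommGroup E] [NormedSpace ℝ E] [FiniteDimensional ℝ E]
  [MeasurableSpace E] [BorelSpace E] [NormedAddCommGroup F] [NormedSpace ℝ F]
  {μ : Measure E} [μ.IsAddHaarMeasure] {k : E → ℝ} {C : ℝ≥0} {M : ℝ}

theorem hasFDerivAt_integral_lipschitz_smul_sub (hk : LipschitzWith C k) (hM : ∀ y, ‖k y‖ ≤ M)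
    {f : E → F} (hf : Integrable f μ) (x : E) :
    HasFDerivAt (fun x' => ∫ y, k y • f (x' - y) ∂μ)
      (∫ y, (fderiv ℝ k y).smulRight (f (x - y)) ∂μ) x := by
  have hflip (x' : E) : ∫ y, k y • f (x' - y) ∂μ = ∫ y, k (x' - y) • f y ∂μ := by
    simpa only [sub_sub_cancel] using
      integral_sub_left_eq_self (fun y => k (x' - y) • f y) μ x'
  have hflip' : ∫ y, (fderiv ℝ k y).smulRight (f (x - y)) ∂μ
      = ∫ y, (fderiv ℝ k (x - y)).smulRight (f y) ∂μ := by
    simpa only [sub_sub_cancel] using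
      integral_sub_left_eq_self (fun y => (fderiv ℝ k (x - y)).smulRight (f y)) μ x
  have hmeas (x' : E) : AEStronglyMeasurable (fun y => k (x' - y)) μ :=
    (hk.continuous.comp (continuous_const.sub continuous_id)).aestronglyMeasurable
  have hdiff : ∀ᵐ y ∂μ, DifferentiableAt ℝ k (x - y) :=
    (Measure.measurePreserving_sub_left μ x).quasiMeasurePreserving.ae hk.ae_differentiableAt
  simp only [hflip, hflip']
  refine (hasFDerivAt_integral_of_dominated_loc_of_lip (bound := fun y => C * ‖f y‖) univ_mem
    (.of_forall fun x' => (hmeas x').smul hf.aestronglyMeasurable)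
    (hf.bdd_smul _ (hmeas x) (ae_of_all _ fun y => hM (x - y))) ?_ (ae_of_all _ fun y => ?_)
    (hf.norm.const_mul _) ?_).2
  · have h : Measurable fun y => fderiv ℝ k (x - y) :=
      (measurable_fderiv ℝ k).comp (measurable_const.sub measurable_id)
    exact (ContinuousLinearMap.smulRightL ℝ E F).aestronglyMeasurable_comp₂
      h.aestronglyMeasurable hf.aestronglyMeasurable
  · refine LipschitzWith.lipschitzOnWith (LipschitzWith.of_dist_le_mul fun v w => ?_)
    calc dist (k (v - y) • f y) (k (w - y) • f y)
        ≤ dist (k (v - y)) (k (w - y)) * ‖f y‖ := by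
          rw [dist_eq_norm, ← sub_smul, norm_smul, dist_eq_norm]
      _ ≤ C * dist (v - y) (w - y) * ‖f y‖ := by gcongr; exact hk.dist_le_mul _ _
      _ = Real.nnabs (C * ‖f y‖) * dist v w := by
          rw [dist_sub_right, Real.coe_nnabs, abs_of_nonneg (by positivity)]; ring
  · filter_upwards [hdiff] with y hy
    exact (hy.hasFDerivAt.comp x ((hasFDerivAt_id x).sub_const y)).smul_const (f y)

theorem integral_smul_fderiv_schwartz_sub_of_lipschitz (hk : LipschitzWith C k)
    (hM : ∀ y, ‖k y‖ ≤ M) (f : SchwartzMap E F) (x : E) :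
    ∫ y, k y • fderiv ℝ f (x - y) ∂μ = ∫ y, (fderiv ℝ k y).smulRight (f (x - y)) ∂μ := by
  have hweight : Integrable
      (fun y : E => k y * (1 + ‖y‖) ^ (-((Module.finrank ℝ E + 1 : ℕ) : ℝ))) μ :=
    (integrable_one_add_norm (by push_cast; linarith)).bdd_mul
      hk.continuous.aestronglyMeasurable (ae_of_all _ hM)
  exact (hasFDerivAt_integral_smul_schwartz_sub hweight f x).unique
    (hasFDerivAt_integral_lipschitz_smul_sub hk hM f.integrable x)

end LipschitzKernel

section Gradient

open InnerProductSpace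
open scoped Gradient

variable {E : Type*} [NormedAddCommGroup E] [InnerProductSpace ℝ E]

theorem toDual_integral [CompleteSpace E] {α : Type*} [MeasurableSpace α] {ν : Measure α}
    (g : α → E) : toDual ℝ E (∫ t, g t ∂ν) = ∫ t, toDual ℝ E (g t) ∂ν :=
  (ContinuousLinearEquiv.integral_comp_comm (𝕜 := ℝ)
    ((toDual ℝ E).toContinuousLinearEquiv : E ≃L[ℝ] StrongDual ℝ E) g).symm

theorem hasGradientAt_norm_rpow_of_ne_zero [CompleteSpace E] (p : ℝ) {z : E} (hz : z ≠ 0) :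
    HasGradientAt (fun w : E => ‖w‖ ^ p) ((p * ‖z‖ ^ (p - 2)) • z) z := by
  have hsq (w : E) (q : ℝ) : (‖w‖ ^ 2) ^ q = ‖w‖ ^ (2 * q) := by
    rw [Real.rpow_mul (norm_nonneg _), Real.rpow_two]
  have h := (hasStrictFDerivAt_norm_sq z).hasFDerivAt.rpow_const (p := p / 2) (by simp [hz])
  simp only [hsq, mul_div_cancel₀ p two_ne_zero, mul_sub, mul_one] at h
  rw [hasGradientAt_iff_hasFDerivAt]
  convert! h using 1
  ext v
  simp only [toDual_apply_apply, inner_smul_left, smul_apply,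
    innerSL_apply_apply, smul_eq_mul, nsmul_eq_mul, RCLike.conj_to_real]
  push_cast
  ring

variable [FiniteDimensional ℝ E] [MeasurableSpace E] [BorelSpace E] {μ : Measure E}

theorem hasGradientAt_integral_mul_schwartz_sub {K : E → ℝ} {n : ℕ}
    (hK : Integrable (fun y => K y * (1 + ‖y‖) ^ (-(n : ℝ))) μ) (u : SchwartzMap E ℝ) (x : E) :
    HasGradientAt (fun x' => ∫ y, K y * u (x' - y) ∂μ) (∫ y, K y • ∇ u (x - y) ∂μ) x := by
  rw [hasGradientAt_iff_hasFDerivAt, toDual_integral]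
  simp only [map_smul, toDual_gradient]
  exact hasFDerivAt_integral_smul_schwartz_sub hK u x

theorem integrable_smul_gradient_schwartz_sub {K : E → ℝ} {n : ℕ}
    (hK : Integrable (fun y => K y * (1 + ‖y‖) ^ (-(n : ℝ))) μ) (u : SchwartzMap E ℝ) (x : E) :
    Integrable (fun y => K y • ∇ u (x - y)) μ := by
  let T : StrongDual ℝ E ≃L[ℝ] E := (toDual ℝ E).symm.toContinuousLinearEquiv
  refine (T.toContinuousLinearMap.integrable_comp
    (integrable_smul_schwartz_sub hK (SchwartzMap.fderivCLM ℝ E ℝ u) x)).congr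
    (ae_of_all _ fun y => ?_)
  exact map_smul T (K y) (fderiv ℝ u (x - y))

theorem integral_smul_gradient_schwartz_sub_of_lipschitz [μ.IsAddHaarMeasure] {k : E → ℝ}
    {C : ℝ≥0} {M : ℝ} (hk : LipschitzWith C k) (hM : ∀ y, ‖k y‖ ≤ M) (u : SchwartzMap E ℝ)
    (x : E) : ∫ y, k y • ∇ u (x - y) ∂μ = ∫ y, u (x - y) • ∇ k y ∂μ := by
  apply (toDual ℝ E).injective
  simp only [toDual_integral, map_smul, toDual_gradient]
  rw [integral_smul_fderiv_schwartz_sub_of_lipschitz hk hM]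
  congr! with y
  ext v
  simp [mul_comm]

end Gradient

section TruncatedRieszKernel

variable {E : Type*} [NormedAddCommGroup E] {a ε : ℝ}

/-- The Riesz kernel `‖y‖ ^ (-a)`, made constant on the ball of radius `ε` so that it stays
continuous across the sphere. -/
noncomputable def truncatedRieszKernel (a ε : ℝ) (y : E) : ℝ :=
  max ‖y‖ ε ^ (-a)

theorem norm_truncatedRieszKernel_le_norm_rpow_neg (ha : 0 ≤ a) {y : E} (hy : y ≠ 0) :
    ‖truncatedRieszKernel a ε y‖ ≤ ‖y‖ ^ (-a) := by
  have hy0 : 0 < ‖y‖ := norm_pos_iff.2 hy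
  rw [truncatedRieszKernel, Real.norm_of_nonneg (by positivity)]
  exact Real.rpow_le_rpow_of_nonpos hy0 (le_max_left _ _) (neg_nonpos.2 ha)

theorem norm_truncatedRieszKernel_le_rpow_neg (ha : 0 ≤ a) (hε : 0 < ε) (y : E) :
    ‖truncatedRieszKernel a ε y‖ ≤ ε ^ (-a) := by
  rw [truncatedRieszKernel, Real.norm_of_nonneg (by positivity)]
  exact Real.rpow_le_rpow_of_nonpos hε (le_max_right _ _) (neg_nonpos.2 ha)

theorem tendsto_truncatedRieszKernel (a : ℝ) {y : E} (hy : y ≠ 0) :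
    Tendsto (fun ε => truncatedRieszKernel a ε y) (𝓝 0) (𝓝 (‖y‖ ^ (-a))) := by
  refine tendsto_const_nhds.congr' ?_
  filter_upwards [Iio_mem_nhds (norm_pos_iff.2 hy)] with ε hε
  rw [truncatedRieszKernel, max_eq_left (le_of_lt hε)]

theorem lipschitzOnWith_rpow_neg_Ici (ha : 0 ≤ a) (hε : 0 < ε) :
    LipschitzOnWith (a * ε ^ (-a - 1)).toNNReal (fun t : ℝ => t ^ (-a)) (Ici ε) := by
  refine (convex_Ici ε).lipschitzOnWith_of_nnnorm_hasDerivWithin_le (fun t ht =>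
    (Real.hasDerivAt_rpow_const (.inl (hε.trans_le ht).ne')).hasDerivWithinAt) fun t ht => ?_
  have ht0 : 0 < t := hε.trans_le ht
  rw [← NNReal.coe_le_coe, coe_nnnorm, Real.coe_toNNReal _ (by positivity), norm_mul, norm_neg,
    Real.norm_of_nonneg ha, Real.norm_of_nonneg (by positivity)]
  gcongr ?_ * ?_
  exact Real.rpow_le_rpow_of_nonpos hε ht (by linarith)

theorem lipschitzWith_truncatedRieszKernel (ha : 0 ≤ a) (hε : 0 < ε) :
    LipschitzWith (a * ε ^ (-a - 1)).toNNReal (truncatedRieszKernel a ε : E → ℝ) := by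
  have hmax : LipschitzWith 1 fun y : E => max ‖y‖ ε := lipschitzWith_one_norm.max_const ε
  have h := (lipschitzOnWith_rpow_neg_Ici ha hε).comp hmax.lipschitzOnWith
    fun y (_ : y ∈ univ) => mem_Ici.2 (le_max_right ‖y‖ ε)
  rwa [mul_one, lipschitzOnWith_univ] at h

theorem tendsto_integral_truncatedRieszKernel_smul [MeasurableSpace E] [OpensMeasurableSpace E]
    {μ : Measure E} [NullSingletonClass μ] {F : Type*} [NormedAddCommGroup F] [NormedSpace ℝ F]
    {g : E → F} (ha : 0 ≤ a) (hg : Integrable (fun y => ‖y‖ ^ (-a) • g y) μ) :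
    Tendsto (fun ε => ∫ y, truncatedRieszKernel a ε y • g y ∂μ) (𝓝 0)
      (𝓝 (∫ y, ‖y‖ ^ (-a) • g y ∂μ)) := by
  have hne : ∀ᵐ y ∂μ, y ≠ 0 := compl_mem_ae_iff.2 (measure_singleton 0)
  refine tendsto_integral_filter_of_dominated_convergence _ (.of_forall fun ε => ?_)
    (.of_forall fun ε => ?_) hg.norm ?_
  · have hratio : AEStronglyMeasurable (fun y : E => max ‖y‖ ε ^ (-a) * ‖y‖ ^ a) μ :=
      Measurable.aestronglyMeasurable (by fun_prop)
    refine (hratio.smul hg.aestronglyMeasurable).congr ?_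
    filter_upwards [hne] with y hy
    have hy0 : 0 < ‖y‖ := norm_pos_iff.2 hy
    simp only [Pi.smul_apply', smul_smul, mul_assoc, ← Real.rpow_add hy0, add_neg_cancel,
      Real.rpow_zero, mul_one, truncatedRieszKernel]
  · filter_upwards [hne] with y hy
    rw [norm_smul, norm_smul, Real.norm_of_nonneg (by positivity : 0 ≤ ‖y‖ ^ (-a))]
    gcongr
    exact norm_truncatedRieszKernel_le_norm_rpow_neg ha hy
  · filter_upwards [hne] with y hy
    exact (tendsto_truncatedRieszKernel a hy).smul_const (g y)

end TruncatedRieszKernel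

section RieszPotential

open InnerProductSpace Module
open scoped Gradient

variable {E : Type*} [NormedAddCommGroup E] [InnerProductSpace ℝ E] {a ε : ℝ}

theorem gradient_truncatedRieszKernel [CompleteSpace E] (a : ℝ) (hε : 0 < ε) {z : E}
    (hz : ‖z‖ ≠ ε) :
    ∇ (truncatedRieszKernel a ε) z
      = {w : E | ε < ‖w‖}.indicator (fun w => (-a * ‖w‖ ^ (-a - 2)) • w) z := by
  rcases hz.lt_or_gt with h | h
  · have hconst : truncatedRieszKernel a ε =ᶠ[𝓝 z] fun _ => ε ^ (-a) := by
      filter_upwards [continuous_norm.continuousAt.eventually_lt_const h] with w hw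
      rw [truncatedRieszKernel, max_eq_right hw.le]
    rw [indicator_of_notMem (by simpa using h.le)]
    exact ((hasGradientAt_const z _).congr_of_eventuallyEq hconst).gradient
  · have hnorm : truncatedRieszKernel a ε =ᶠ[𝓝 z] fun w => ‖w‖ ^ (-a) := by
      filter_upwards [continuous_norm.continuousAt.eventually_const_lt h] with w hw
      rw [truncatedRieszKernel, max_eq_left hw.le]
    rw [indicator_of_mem (by simpa using h)]
    exact ((hasGradientAt_norm_rpow_of_ne_zero (-a)
      (norm_pos_iff.1 (hε.trans h))).congr_of_eventuallyEq hnorm).gradient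

variable [FiniteDimensional ℝ E] [MeasurableSpace E] [BorelSpace E]
  {μ : Measure E} [μ.IsAddHaarMeasure]

theorem integral_truncatedRieszKernel_smul_gradient_schwartz_sub (ha : 0 ≤ a)
    (hε : 0 < ε) (u : SchwartzMap E ℝ) (x : E) :
    ∫ y, truncatedRieszKernel a ε y • ∇ u (x - y) ∂μ
      = -a • ∫ y in {y : E | ε < ‖y‖}, (u (x - y) * ‖y‖ ^ (-(a + 2))) • y ∂μ := by
  have hsphere : ∀ᵐ y : E ∂μ, ‖y‖ ≠ ε := by
    filter_upwards [measure_eq_zero_iff_ae_notMem.1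
      (Measure.addHaar_sphere_of_ne_zero μ 0 hε.ne')] with y hy
    simpa using hy
  rw [integral_smul_gradient_schwartz_sub_of_lipschitz (lipschitzWith_truncatedRieszKernel ha hε)
      (norm_truncatedRieszKernel_le_rpow_neg ha hε), ← integral_smul,
    ← integral_indicator (measurableSet_lt measurable_const measurable_norm)]
  refine integral_congr_ae ?_
  filter_upwards [hsphere] with y hy
  rw [gradient_truncatedRieszKernel a hε hy]
  by_cases h : y ∈ {w : E | ε < ‖w‖}
  · rw [indicator_of_mem h, indicator_of_mem h, smul_smul, smul_smul, neg_add']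
    ring_nf
  · rw [indicator_of_notMem h, indicator_of_notMem h, smul_zero]

theorem integrable_norm_rpow_neg_mul_one_add_norm {r : ℝ} (ha0 : 0 ≤ a) (ha : a < finrank ℝ E)
    (hr : finrank ℝ E < r) : Integrable (fun y : E => ‖y‖ ^ (-a) * (1 + ‖y‖) ^ (-r)) μ := by
  have hE : 1 ≤ finrank ℝ E := by exact_mod_cast ha0.trans_lt ha
  have hball : IntegrableOn (fun y : E => ‖y‖ ^ (-a)) (ball 0 1) μ :=
    integrableOn_ball_of_norm_le_rpow (C := 1) hE ha
      (ae_of_all _ fun y => by rw [one_mul, Real.norm_of_nonneg (by positivity)])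
      (Measurable.aestronglyMeasurable (by fun_prop))
  refine ((hball.integrable_indicator measurableSet_ball).add
    (integrable_one_add_norm hr)).mono' (by fun_prop) (ae_of_all _ fun y => ?_)
  have hr0 : 0 ≤ r := hr.le.trans' (by positivity)
  rw [Real.norm_of_nonneg (by positivity), Pi.add_apply]
  by_cases hy : y ∈ ball 0 1
  · rw [indicator_of_mem hy]
    refine (mul_le_of_le_one_right (by positivity) ?_).trans
      (le_add_of_nonneg_right (by positivity))
    exact Real.rpow_le_one_of_one_le_of_nonpos (by simp) (neg_nonpos.2 hr0)
  · rw [indicator_of_notMem hy, zero_add]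
    refine mul_le_of_le_one_left (by positivity) ?_
    exact Real.rpow_le_one_of_one_le_of_nonpos (by simpa using hy) (neg_nonpos.2 ha0)

theorem integrable_norm_rpow_neg_mul_one_add_norm_finrank_succ (ha0 : 0 ≤ a)
    (ha : a < finrank ℝ E) :
    Integrable (fun y : E => ‖y‖ ^ (-a) * (1 + ‖y‖) ^ (-((finrank ℝ E + 1 : ℕ) : ℝ))) μ :=
  integrable_norm_rpow_neg_mul_one_add_norm ha0 ha (by push_cast; linarith)

theorem hasGradientAt_integral_schwartz_sub_mul_norm_rpow_neg (ha0 : 0 ≤ a)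
    (ha : a < finrank ℝ E) (u : SchwartzMap E ℝ) (x : E) :
    HasGradientAt (fun x' => ∫ y, u (x' - y) * ‖y‖ ^ (-a) ∂μ)
      (∫ y, ‖y‖ ^ (-a) • ∇ u (x - y) ∂μ) x := by
  simpa only [mul_comm] using hasGradientAt_integral_mul_schwartz_sub
    (integrable_norm_rpow_neg_mul_one_add_norm_finrank_succ (μ := μ) ha0 ha) u x

theorem hasPrincipalValue_schwartz_sub_mul_norm_rpow_smul (ha0 : 0 < a) (ha : a < finrank ℝ E)
    (u : SchwartzMap E ℝ) (x : E) :
    HasPrincipalValue μ (fun y => (u (x - y) * ‖y‖ ^ (-(a + 2))) • y)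
      ((-a)⁻¹ • ∫ y, ‖y‖ ^ (-a) • ∇ u (x - y) ∂μ) := by
  have : Nontrivial E := nontrivial_of_finrank_pos (R := ℝ) (by exact_mod_cast ha0.trans ha)
  have hlim := tendsto_integral_truncatedRieszKernel_smul ha0.le
    (integrable_smul_gradient_schwartz_sub
      (integrable_norm_rpow_neg_mul_one_add_norm_finrank_succ (μ := μ) ha0.le ha) u x)
  refine ((hlim.mono_left nhdsWithin_le_nhds).const_smul (-a)⁻¹).congr' ?_
  filter_upwards [self_mem_nhdsWithin] with ε hε
  rw [integral_truncatedRieszKernel_smul_gradient_schwartz_sub ha0.le hε,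
    inv_smul_smul₀ (neg_ne_zero.2 ha0.ne')]

end RieszPotential

theorem stmt0_general {E : Type*} [NormedAddCommGroup E] [InnerProductSpace ℝ E]
    [FiniteDimensional ℝ E] [MeasurableSpace E] [BorelSpace E] (μ : Measure E)
    [μ.IsAddHaarMeasure] {a : ℝ} (ha : a ∈ Ioo (0 : ℝ) (Module.finrank ℝ E))
    (u : SchwartzMap E ℝ) (x : E) :
    ∃ L : E, HasPrincipalValue μ (fun y => (u (x - y) * ‖y‖ ^ (-(a + 2))) • y) L ∧
      HasGradientAt (fun x' => ∫ y, u (x' - y) * ‖y‖ ^ (-a) ∂μ) (-a • L) x := by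
  refine ⟨_, hasPrincipalValue_schwartz_sub_mul_norm_rpow_smul ha.1 ha.2 u x, ?_⟩
  rw [smul_inv_smul₀ (neg_ne_zero.2 ha.1.ne')]
  exact hasGradientAt_integral_schwartz_sub_mul_norm_rpow_neg ha.1.le ha.2 u x

/-- For `s ∈ (0, 1/2)`, the gradient in `x` of the Riesz potential `(−Δ)^{−s} u`
(defined via the standard representation `∫ u(x−y)|y|^{2s−d} dy`, constants absorbed)
of a Schwartz function `u` has the principal value representation
`D_x (−Δ)^{−s} u (x) = N(d,s) · p.v. ∫ u(x−y) y/|y|^{d−2s+2} dy`. -/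
theorem stmt0 (d : ℕ) (hd : 0 < d) (s : ℝ) (hs : s ∈ Set.Ioo (0 : ℝ) (1/2)) :
    ∃ N : ℝ, ∀ (u : SchwartzMap (EuclideanSpace ℝ (Fin d)) ℝ)
      (x : EuclideanSpace ℝ (Fin d)),
      ∃ L : EuclideanSpace ℝ (Fin d),
        Tendsto
          (fun ε : ℝ => ∫ y in {y : EuclideanSpace ℝ (Fin d) | ε < ‖y‖},
            (u (x - y) * ‖y‖ ^ (-((d : ℝ) - 2*s + 2))) • y)
          (𝓝[>] (0 : ℝ)) (𝓝 L) ∧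
        gradient (fun x' : EuclideanSpace ℝ (Fin d) =>
          ∫ y : EuclideanSpace ℝ (Fin d), u (x' - y) * ‖y‖ ^ (2*s - (d : ℝ))) x
          = N • L := by
  have hd1 : (1 : ℝ) ≤ d := by exact_mod_cast hd
  have ha : (d : ℝ) - 2 * s ∈ Ioo (0 : ℝ) (Module.finrank ℝ (EuclideanSpace ℝ (Fin d))) := by
    rw [finrank_euclideanSpace_fin]
    constructor <;> linarith [hs.1, hs.2]
  refine ⟨-((d : ℝ) - 2 * s), fun u x => ?_⟩
  obtain ⟨L, hL, hgrad⟩ := stmt0_general volume ha u x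
  exact ⟨L, hL, by simpa only [neg_sub] using hgrad.gradient⟩
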